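/- For general points: ℓ(L(4e+4, 4e−4, 6^{2e})) = 14 − 6e for 1 ≤ e ≤ 2 (virtual dimension −6e + 8); ℓ(L(4e+5, 4e−3, 6^{2e})) = 20 − 6e for 1 ≤ e ≤ 2 (virtual dimension −6e + 17); and ℓ(L(4e+6, 4e−2, 6^{2e})) = 27 − 6e for 1 ≤ e ≤ 4 (virtual dimension −6e + 26); in particular all these systems are special. -/

import Mathlib

open MvPolynomial

/-- The iterated partial derivative corresponding to the multi-index `ν`. -/
noncomputable def mderiv (ν : Fin 3 → ℕ) :
    MvPolynomial (Fin 3) ℂ →ₗ[ℂ] MvPolynomial (Fin 3) ℂ :=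
  ((pderiv (R := ℂ) (0 : Fin 3)).toLinearMap ^ ν 0) ∘ₗ
  ((pderiv (R := ℂ) (1 : Fin 3)).toLinearMap ^ ν 1) ∘ₗ
  ((pderiv (R := ℂ) (2 : Fin 3)).toLinearMap ^ ν 2)

/-- The linear system `L(d; m)` of homogeneous forms of degree `d` in three variables
all of whose partial derivatives of order `< m i` vanish at the point `p i`,
i.e. plane curves of degree `d` with multiplicity at least `m i` at `p i`. -/
noncomputable def linSys {k : ℕ} (p : Fin k → Fin 3 → ℂ) (d : ℕ) (m : Fin k → ℕ) :
    Submodule ℂ (MvPolynomial (Fin 3) ℂ) :=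
  (homogeneousSubmodule (Fin 3) ℂ d) ⊓
    ⨅ (i : Fin k), ⨅ (ν : Fin 3 → ℕ), ⨅ (_ : ν 0 + ν 1 + ν 2 < m i),
      LinearMap.ker ((aeval (p i)).toLinearMap ∘ₗ mderiv ν)

/-- The projective dimension `ℓ` of the linear system (`-1` means empty). -/
noncomputable def projDim {k : ℕ} (p : Fin k → Fin 3 → ℂ) (d : ℕ) (m : Fin k → ℕ) : ℤ :=
  (Module.finrank ℂ (linSys p d m) : ℤ) - 1

/-- The virtual dimension `v = d(d+3)/2 - ∑ mᵢ(mᵢ+1)/2`. -/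
def virtDim {k : ℕ} (d : ℕ) (m : Fin k → ℕ) : ℤ :=
  ((d : ℤ) * (d + 3)) / 2 - ∑ i : Fin k, ((m i : ℤ) * (m i + 1)) / 2

/-- The quasi-homogeneous multiplicity vector `(m₀, 6, …, 6)` on `n + 1` points. -/
def qh (n m0 : ℕ) : Fin (n + 1) → ℕ := fun i => if i = 0 then m0 else 6

/-- A property `Q` of configurations of `k` points of `ℙ²` (given by nonzero homogeneous
coordinate vectors) holds for points in general position: there is a nonzero polynomial
in the coordinates such that `Q` holds whenever it does not vanish. -/
def Generically (k : ℕ) (Q : (Fin k → Fin 3 → ℂ) → Prop) : Prop :=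
  ∃ P : MvPolynomial (Fin k × Fin 3) ℂ, P ≠ 0 ∧
    ∀ p : Fin k → Fin 3 → ℂ, (∀ i, p i ≠ 0) →
      eval (fun x => p x.1 x.2) P ≠ 0 → Q p

/-- The polynomial `f` and all its iterated partial derivatives of order `< m` vanish at `q`. -/
def VanishesToOrder (q : Fin 3 → ℂ) : ℕ → MvPolynomial (Fin 3) ℂ → Prop
  | 0, _ => True
  | m + 1, f => eval q f = 0 ∧ ∀ i, VanishesToOrder q m (pderiv i f)

namespace VanishesToOrder

variable {q : Fin 3 → ℂ} {m n : ℕ} {f g : MvPolynomial (Fin 3) ℂ}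

lemma zero_right : VanishesToOrder q m 0 := by
  induction m with
  | zero => trivial
  | succ m ih => exact ⟨by simp, fun i => by simpa using ih⟩

lemma of_succ (h : VanishesToOrder q (m + 1) f) : VanishesToOrder q m f := by
  induction m generalizing f with
  | zero => trivial
  | succ m ih => exact ⟨h.1, fun i => ih (h.2 i)⟩

lemma mono (hnm : n ≤ m) (h : VanishesToOrder q m f) : VanishesToOrder q n f := by
  induction hnm with
  | refl => exact h
  | step _ ih => exact ih h.of_succ

lemma eval_eq_zero (hm : 0 < m) (h : VanishesToOrder q m f) : eval q f = 0 :=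
  (h.mono hm : VanishesToOrder q 1 f).1

lemma pderiv (i : Fin 3) (h : VanishesToOrder q m f) :
    VanishesToOrder q (m - 1) (pderiv i f) := by
  cases m with
  | zero => trivial
  | succ m => exact h.2 i

lemma add (hf : VanishesToOrder q m f) (hg : VanishesToOrder q m g) :
    VanishesToOrder q m (f + g) := by
  induction m generalizing f g with
  | zero => trivial
  | succ m ih => exact ⟨by simp [hf.1, hg.1], fun i => by simpa using ih (hf.2 i) (hg.2 i)⟩

lemma smul (c : ℂ) (hf : VanishesToOrder q m f) : VanishesToOrder q m (c • f) := by
  induction m generalizing f with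
  | zero => trivial
  | succ m ih => exact ⟨by simp [hf.1], fun i => by simpa using ih (hf.2 i)⟩

lemma sum {ι : Type*} (s : Finset ι) {F : ι → MvPolynomial (Fin 3) ℂ}
    (h : ∀ j ∈ s, VanishesToOrder q m (F j)) : VanishesToOrder q m (∑ j ∈ s, F j) :=
  Finset.sum_induction F _ (fun _ _ => add) zero_right h

lemma mul (hf : VanishesToOrder q m f) (hg : VanishesToOrder q n g) :
    VanishesToOrder q (m + n) (f * g) := by
  induction hk : m + n generalizing m n f g with
  | zero => trivial
  | succ k ih =>
    refine ⟨?_, fun i => ?_⟩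
    · rcases Nat.eq_zero_or_pos m with rfl | hm
      · rw [map_mul, hg.eval_eq_zero (by omega), mul_zero]
      · rw [map_mul, hf.eval_eq_zero hm, zero_mul]
    · rw [pderiv_mul]
      refine add ?_ ?_
      · rcases Nat.eq_zero_or_pos m with rfl | hm
        · exact ih (m := 0) (n := k) trivial (hg.mono (by omega)) (by omega)
        · exact ih (hf.pderiv i) hg (by omega)
      · rcases Nat.eq_zero_or_pos n with rfl | hn
        · exact ih (m := k) (n := 0) (hf.mono (by omega)) trivial (by omega)
        · exact ih hf (hg.pderiv i) (by omega)

lemma mul_left (g : MvPolynomial (Fin 3) ℂ) (hf : VanishesToOrder q m f) :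
    VanishesToOrder q m (g * f) := by
  simpa using mul (q := q) (m := 0) (f := g) trivial hf

lemma pow (hf : VanishesToOrder q m f) (k : ℕ) : VanishesToOrder q (k * m) (f ^ k) := by
  induction k with
  | zero => simp [VanishesToOrder]
  | succ k ih => rw [pow_succ, Nat.succ_mul]; exact ih.mul hf

lemma of_mul_left (hg : eval q g ≠ 0) (h : VanishesToOrder q m (g * f)) :
    VanishesToOrder q m f := by
  induction m generalizing f with
  | zero => trivial
  | succ m ih =>
    have hf : VanishesToOrder q m f := ih h.of_succ
    refine ⟨by simpa [hg] using h.1, fun i => ih ?_⟩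
    have := (h.2 i).add ((hf.mul_left (MvPolynomial.pderiv i g)).smul (-1))
    rw [pderiv_mul] at this
    convert this using 1
    simp

lemma _root_.pderiv_bind₁ (φ : Fin 3 → MvPolynomial (Fin 3) ℂ) (i : Fin 3)
    (f : MvPolynomial (Fin 3) ℂ) :
    MvPolynomial.pderiv i (bind₁ φ f) =
      ∑ j, MvPolynomial.pderiv i (φ j) * bind₁ φ (MvPolynomial.pderiv j f) := by
  induction f using MvPolynomial.induction_on with
  | C a => simp
  | add p r hp hr => simp [hp, hr, mul_add, Finset.sum_add_distrib]
  | mul_X p j hp =>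
    have h : ∀ k, MvPolynomial.pderiv i (φ k) * bind₁ φ (MvPolynomial.pderiv k (p * X j)) =
        MvPolynomial.pderiv i (φ k) * bind₁ φ (MvPolynomial.pderiv k p) * φ j +
          if k = j then MvPolynomial.pderiv i (φ j) * bind₁ φ p else 0 := by
      intro k
      rw [pderiv_mul, map_add, map_mul, map_mul, bind₁_X_right, mul_add, mul_assoc]
      congr 1
      split_ifs with hk
      · rw [hk, pderiv_X_self, map_one, mul_one]
      · rw [pderiv_X_of_ne (Ne.symm hk), map_zero, mul_zero, mul_zero]
    rw [map_mul, bind₁_X_right, pderiv_mul, hp, Finset.sum_congr rfl fun k _ => h k,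
      Finset.sum_add_distrib, Finset.sum_ite_eq' Finset.univ j, if_pos (Finset.mem_univ j),
      Finset.sum_mul, mul_comm (bind₁ φ p)]

lemma _root_.eval_bind₁ (q : Fin 3 → ℂ) (φ : Fin 3 → MvPolynomial (Fin 3) ℂ)
    (f : MvPolynomial (Fin 3) ℂ) :
    eval q (bind₁ φ f) = eval (fun j => eval q (φ j)) f := by
  induction f using MvPolynomial.induction_on with
  | C a => simp
  | add p r hp hr => simp [hp, hr]
  | mul_X p j hp => simp [hp]

lemma bind₁ (φ : Fin 3 → MvPolynomial (Fin 3) ℂ)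
    (h : VanishesToOrder (fun j => eval q (φ j)) m f) :
    VanishesToOrder q m (bind₁ φ f) := by
  induction m generalizing f with
  | zero => trivial
  | succ m ih =>
    refine ⟨(eval_bind₁ q φ f).trans h.1, fun i => ?_⟩
    rw [pderiv_bind₁]
    exact sum _ fun j _ => (ih (h.2 j)).mul_left _

end VanishesToOrder

lemma pderiv_comm (i j : Fin 3) (f : MvPolynomial (Fin 3) ℂ) :
    pderiv i (pderiv j f) = pderiv j (pderiv i f) := by
  ext m
  simp only [coeff_pderiv, Finsupp.add_apply]
  rcases eq_or_ne i j with rfl | h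
  · rfl
  · rw [add_right_comm]
    simp [h, h.symm]
    ring

lemma mderiv_zero (f : MvPolynomial (Fin 3) ℂ) : mderiv 0 f = f := by
  simp [mderiv]

lemma commute_pderiv (i j : Fin 3) :
    Commute (pderiv (R := ℂ) i).toLinearMap (pderiv (R := ℂ) j).toLinearMap :=
  LinearMap.ext fun f => pderiv_comm i j f

lemma mderiv_add_single (i : Fin 3) (ν : Fin 3 → ℕ) (f : MvPolynomial (Fin 3) ℂ) :
    mderiv (ν + Pi.single i 1) f = mderiv ν (pderiv i f) := by
  have h : mderiv (ν + Pi.single i 1) = mderiv ν * (pderiv i).toLinearMap := by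
    unfold mderiv
    simp only [← Module.End.mul_eq_comp]
    have h10 := (commute_pderiv 0 1).pow_right (ν 1)
    have h20 := (commute_pderiv 0 2).pow_right (ν 2)
    have h21 := (commute_pderiv 1 2).pow_right (ν 2)
    fin_cases i
    · simp [pow_succ, mul_assoc, (h10.mul_right h20).eq]
    · simp [pow_succ, mul_assoc, h21.eq]
    · simp [pow_succ, mul_assoc]
  rw [h]; rfl

lemma exists_eq_add_single {ν : Fin 3 → ℕ} (h : 0 < ν 0 + ν 1 + ν 2) :
    ∃ (i : Fin 3) (μ : Fin 3 → ℕ), ν = μ + Pi.single i 1 := by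
  obtain ⟨i, hi⟩ : ∃ i, 0 < ν i := by
    by_contra! H
    have := H 0; have := H 1; have := H 2
    omega
  exact ⟨i, ν - Pi.single i 1, (tsub_add_cancel_of_le (by
    intro j; rcases eq_or_ne j i with rfl | hj <;> simp_all; omega)).symm⟩

lemma vanishesToOrder_iff {q : Fin 3 → ℂ} {m : ℕ} {f : MvPolynomial (Fin 3) ℂ} :
    VanishesToOrder q m f ↔
      ∀ ν : Fin 3 → ℕ, ν 0 + ν 1 + ν 2 < m → eval q (mderiv ν f) = 0 := by
  induction m generalizing f with
  | zero => simp [VanishesToOrder]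
  | succ m ih =>
    constructor
    · rintro ⟨h0, h⟩ ν hν
      rcases Nat.eq_zero_or_pos (ν 0 + ν 1 + ν 2) with h1 | h1
      · have : ν = 0 := by ext i; fin_cases i <;> simp <;> omega
        simpa [this, mderiv_zero] using h0
      · obtain ⟨i, μ, rfl⟩ := exists_eq_add_single h1
        rw [mderiv_add_single]
        refine ih.1 (h i) μ ?_
        fin_cases i <;> simp at hν <;> omega
    · intro h
      refine ⟨by simpa [mderiv_zero] using h 0 (by simp), fun i => ih.2 fun ν hν => ?_⟩
      rw [← mderiv_add_single]
      refine h _ ?_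
      fin_cases i <;> simp <;> omega

lemma mem_linSys {k : ℕ} {p : Fin k → Fin 3 → ℂ} {d : ℕ} {m : Fin k → ℕ}
    {f : MvPolynomial (Fin 3) ℂ} :
    f ∈ linSys p d m ↔ f.IsHomogeneous d ∧ ∀ i, VanishesToOrder (p i) (m i) f := by
  simp [linSys, vanishesToOrder_iff, aeval_eq_eval]

instance finite_homogeneousSubmodule (d : ℕ) :
    Module.Finite ℂ (homogeneousSubmodule (Fin 3) ℂ d) :=
  Module.Finite.iff_fg.2 (homogeneousSubmodule_fg (Fin 3) ℂ d)

instance finite_linSys {k : ℕ} (p : Fin k → Fin 3 → ℂ) (d : ℕ) (m : Fin k → ℕ) :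
    Module.Finite ℂ (linSys p d m) :=
  Submodule.finiteDimensional_of_le (S₂ := homogeneousSubmodule (Fin 3) ℂ d) inf_le_left

lemma finrank_homogeneousSubmodule (d : ℕ) :
    Module.finrank ℂ (homogeneousSubmodule (Fin 3) ℂ d) = (d + 2).choose 2 := by
  have e : {a : Fin 3 →₀ ℕ | a.degree = d} ≃ (Finset.univ : Finset (Fin 3)).finsuppAntidiag d :=
    Equiv.subtypeEquivRight fun a => by
      simp [Finset.mem_finsuppAntidiag, Finsupp.degree_eq_sum]
  have : Fintype {a : Fin 3 →₀ ℕ | a.degree = d} := Fintype.ofEquiv _ e.symm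
  rw [homogeneousSubmodule_eq_finsupp_supported,
    (AddMonoidAlgebra.supportedEquivFinsupp _).finrank_eq, Module.finrank_finsupp_self,
    Fintype.card_congr e, Fintype.card_coe, Finset.card_finsuppAntidiag_nat_eq_choose,
    Finset.card_univ, Fintype.card_fin, show 3 + d - 1 = d + 2 by omega, Nat.choose_symm_add]

/-- The multi-indices of the partial derivatives of order exactly `m - 1`. -/
def topIndices : ℕ → Finset (Fin 3 →₀ ℕ)
  | 0 => ∅
  | m + 1 => Finset.univ.finsuppAntidiag m

lemma card_topIndices (m : ℕ) : (topIndices m).card = (m + 1).choose 2 := by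
  cases m with
  | zero => simp [topIndices]
  | succ m =>
    rw [topIndices, Finset.card_finsuppAntidiag_nat_eq_choose, Finset.card_univ, Fintype.card_fin,
      show 3 + m - 1 = m + 2 by omega, Nat.choose_symm_add]

lemma vanishesToOrder_of_top {q : Fin 3 → ℂ} {m d : ℕ} {f : MvPolynomial (Fin 3) ℂ}
    (hf : f.IsHomogeneous d) (hm : m ≤ d)
    (h : ∀ ν : Fin 3 → ℕ, ν 0 + ν 1 + ν 2 = m → eval q (mderiv ν f) = 0) :
    VanishesToOrder q (m + 1) f := by
  induction m generalizing f d with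
  | zero => exact ⟨by simpa [mderiv_zero] using h 0 (by simp), fun _ => trivial⟩
  | succ m ih =>
    have hd : ∀ i, VanishesToOrder q (m + 1) (pderiv i f) := fun i => by
      refine ih (hf.pderiv (i := i)) (by omega) fun ν hν => ?_
      rw [← mderiv_add_single]
      refine h _ ?_
      fin_cases i <;> simp <;> omega
    refine ⟨?_, hd⟩
    have euler := congrArg (eval q) hf.sum_X_mul_pderiv
    simp only [map_sum, map_mul, (hd _).eval_eq_zero m.succ_pos, mul_zero, Finset.sum_const_zero,
      nsmul_eq_mul] at euler
    have : (d : ℂ) ≠ 0 := by norm_cast; omega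
    simpa [this] using euler.symm

lemma vanishesToOrder_iff_top {q : Fin 3 → ℂ} {m d : ℕ} {f : MvPolynomial (Fin 3) ℂ}
    (hf : f.IsHomogeneous d) (hm : m ≤ d + 1) :
    VanishesToOrder q m f ↔ ∀ ν ∈ topIndices m, eval q (mderiv ν f) = 0 := by
  cases m with
  | zero => simp [VanishesToOrder, topIndices]
  | succ m =>
    constructor
    · intro h ν hν
      simp only [topIndices, Finset.mem_finsuppAntidiag, Fin.sum_univ_three] at hν
      exact vanishesToOrder_iff.1 h ν (by omega)
    · intro h
      refine vanishesToOrder_of_top hf (by omega) fun ν hν => ?_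
      refine h (Finsupp.equivFunOnFinite.symm ν) ?_
      simp [topIndices, Finset.mem_finsuppAntidiag, Fin.sum_univ_three, hν]

/-- The linear conditions cutting out a linear system among forms of fixed degree. -/
noncomputable def conditions {k : ℕ} (p : Fin k → Fin 3 → ℂ) (m : Fin k → ℕ) :
    MvPolynomial (Fin 3) ℂ →ₗ[ℂ] ((Σ i : Fin k, topIndices (m i)) → ℂ) :=
  LinearMap.pi fun c => (aeval (p c.1)).toLinearMap ∘ₗ mderiv c.2.1

lemma linSys_eq {k : ℕ} (p : Fin k → Fin 3 → ℂ) {d : ℕ} {m : Fin k → ℕ} (hm : ∀ i, m i ≤ d + 1) :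
    linSys p d m = homogeneousSubmodule (Fin 3) ℂ d ⊓ LinearMap.ker (conditions p m) := by
  ext f
  rw [mem_linSys, Submodule.mem_inf, mem_homogeneousSubmodule, LinearMap.mem_ker, funext_iff]
  refine and_congr_right fun hf => ?_
  simp only [vanishesToOrder_iff_top hf (hm _), Sigma.forall, Subtype.forall]
  simp [conditions, aeval_eq_eval]

lemma finrank_le_finrank_inf_ker_add {V ι : Type*} [AddCommGroup V] [Module ℂ V] [Fintype ι]
    (W : Submodule ℂ V) [Module.Finite ℂ W] (A : V →ₗ[ℂ] (ι → ℂ)) :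
    Module.finrank ℂ W ≤
      Module.finrank ℂ (W ⊓ LinearMap.ker A : Submodule ℂ V) + Fintype.card ι := by
  have h1 := (A.domRestrict W).finrank_range_add_finrank_ker
  have h2 : Module.finrank ℂ (LinearMap.range (A.domRestrict W)) ≤ Fintype.card ι := by
    simpa using (LinearMap.range (A.domRestrict W)).finrank_le
  have h3 : Module.finrank ℂ (LinearMap.ker (A.domRestrict W)) =
      Module.finrank ℂ (W ⊓ LinearMap.ker A : Submodule ℂ V) := by
    rw [← Submodule.finrank_map_subtype_eq, LinearMap.ker_domRestrict, Submodule.map_comap_subtype]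
  omega

lemma card_conditions {k : ℕ} (m : Fin k → ℕ) :
    Fintype.card (Σ i : Fin k, topIndices (m i)) = ∑ i, (m i + 1).choose 2 := by
  simp [card_topIndices]

lemma choose_le_finrank_linSys {k : ℕ} (p : Fin k → Fin 3 → ℂ) {d : ℕ} {m : Fin k → ℕ}
    (hm : ∀ i, m i ≤ d + 1) :
    (d + 2).choose 2 ≤ Module.finrank ℂ (linSys p d m) + ∑ i, (m i + 1).choose 2 := by
  rw [linSys_eq p hm, ← finrank_homogeneousSubmodule, ← card_conditions]
  exact finrank_le_finrank_inf_ker_add _ _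

lemma finrank_linSys_castSucc_le {k : ℕ} (p : Fin (k + 1) → Fin 3 → ℂ) (d : ℕ)
    (m : Fin (k + 1) → ℕ) (hm : m (Fin.last k) ≤ d + 1) :
    Module.finrank ℂ (linSys (p ∘ Fin.castSucc) d (m ∘ Fin.castSucc)) ≤
      Module.finrank ℂ (linSys p d m) + (m (Fin.last k) + 1).choose 2 := by
  let A : MvPolynomial (Fin 3) ℂ →ₗ[ℂ] (topIndices (m (Fin.last k)) → ℂ) :=
    LinearMap.pi fun c => (aeval (p (Fin.last k))).toLinearMap ∘ₗ mderiv c.1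
  have h : linSys (p ∘ Fin.castSucc) d (m ∘ Fin.castSucc) ⊓ LinearMap.ker A = linSys p d m := by
    ext f
    rw [Submodule.mem_inf, mem_linSys, mem_linSys, Fin.forall_fin_succ', and_assoc]
    refine and_congr_right fun hf => and_congr_right fun _ => ?_
    rw [vanishesToOrder_iff_top hf hm, LinearMap.mem_ker, funext_iff]
    simp [A, aeval_eq_eval]
  have := finrank_le_finrank_inf_ker_add (linSys (p ∘ Fin.castSucc) d (m ∘ Fin.castSucc)) A
  rwa [h, Fintype.card_coe, card_topIndices] at this

lemma exists_polynomial_finrank_ker_le {V ι σ : Type*} [AddCommGroup V] [Module ℂ V]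
    [FiniteDimensional ℂ V] [Fintype ι] (A : (σ → ℂ) → V →ₗ[ℂ] (ι → ℂ))
    (hA : ∀ v c, ∃ Q : MvPolynomial σ ℂ, ∀ x, A x v c = eval x Q) (x₀ : σ → ℂ) :
    ∃ P : MvPolynomial σ ℂ, eval x₀ P ≠ 0 ∧ ∀ x, eval x P ≠ 0 →
      Module.finrank ℂ (LinearMap.ker (A x)) ≤ Module.finrank ℂ (LinearMap.ker (A x₀)) := by
  classical
  choose Q hQ using hA
  obtain ⟨K, hK⟩ := Submodule.exists_isCompl (LinearMap.ker (A x₀))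
  obtain ⟨B, hB⟩ := LinearMap.exists_leftInverse_of_injective ((A x₀).domRestrict K) (by
    rw [LinearMap.ker_domRestrict, ← Submodule.disjoint_iff_comap_eq_bot]
    exact hK.disjoint.symm)
  let b := Module.finBasis ℂ K
  let M : Matrix (Fin (Module.finrank ℂ K)) (Fin (Module.finrank ℂ K)) (MvPolynomial σ ℂ) :=
    fun i j => ∑ c, C (b.repr (B (Pi.single c 1)) i) * Q (b j) c
  have hM : ∀ x, eval x M.det = LinearMap.det (B ∘ₗ (A x).domRestrict K) := by
    intro x
    rw [RingHom.map_det, ← LinearMap.det_toMatrix b]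
    congr 1
    ext i j
    have h1 : (eval x).mapMatrix M i j =
        ∑ c, b.repr (B (Pi.single c 1)) i * (A x).domRestrict K (b j) c := by
      change eval x (M i j) = _
      simp [M, hQ]
    have h2 : ∀ v : ι → ℂ, v = ∑ c, v c • (Pi.single c 1 : ι → ℂ) := fun v => by
      ext c
      simp [Finset.sum_apply, Pi.single_apply]
    rw [h1, LinearMap.toMatrix_apply, LinearMap.comp_apply]
    generalize (A x).domRestrict K (b j) = v
    conv_rhs => rw [h2 v]
    simp only [map_sum, map_smul, Finsupp.coe_finsetSum, Finset.sum_apply, Finsupp.smul_apply,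
      smul_eq_mul]
    exact Finset.sum_congr rfl fun c _ => mul_comm _ _
  refine ⟨M.det, by simp [hM, hB], fun x hx => ?_⟩
  rw [hM] at hx
  have hdis : Disjoint (LinearMap.ker (A x)) K := by
    rw [disjoint_comm, Submodule.disjoint_iff_comap_eq_bot, ← LinearMap.ker_domRestrict]
    refine LinearMap.ker_eq_bot.2 (Function.Injective.of_comp (f := B) ?_)
    exact (LinearMap.equivOfDetNeZero _ hx).injective
  have h1 := Submodule.finrank_add_finrank_le_of_disjoint hdis
  have h2 := Submodule.finrank_add_eq_of_isCompl hK
  omega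

/-- The linear conditions of a linear system, on the space of forms of degree `d`. -/
noncomputable def formConditions {k : ℕ} (d : ℕ) (m : Fin k → ℕ) (p : Fin k → Fin 3 → ℂ) :
    homogeneousSubmodule (Fin 3) ℂ d →ₗ[ℂ] ((Σ i : Fin k, topIndices (m i)) → ℂ) :=
  (conditions p m).domRestrict _

lemma finrank_ker_formConditions {k d : ℕ} {m : Fin k → ℕ} (hm : ∀ i, m i ≤ d + 1)
    (p : Fin k → Fin 3 → ℂ) :
    Module.finrank ℂ (LinearMap.ker (formConditions d m p)) = Module.finrank ℂ (linSys p d m) := by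
  rw [formConditions, ← Submodule.finrank_map_subtype_eq, LinearMap.ker_domRestrict,
    Submodule.map_comap_subtype, linSys_eq p hm]

lemma formConditions_apply {k d : ℕ} {m : Fin k → ℕ} (p : Fin k → Fin 3 → ℂ)
    (f : homogeneousSubmodule (Fin 3) ℂ d) (c : Σ i : Fin k, topIndices (m i)) :
    formConditions d m p f c = eval (fun x => p x.1 x.2)
      (rename (fun j => (c.1, j)) (mderiv c.2.1 (f : MvPolynomial (Fin 3) ℂ))) := by
  rw [eval_rename, formConditions, LinearMap.domRestrict_apply, conditions, LinearMap.pi_apply,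
    LinearMap.comp_apply, AlgHom.toLinearMap_apply, aeval_eq_eval]
  rfl

lemma exists_polynomial_finrank_linSys_le {k : ℕ} (p₀ : Fin k → Fin 3 → ℂ) {d : ℕ}
    {m : Fin k → ℕ} (hm : ∀ i, m i ≤ d + 1) :
    ∃ P : MvPolynomial (Fin k × Fin 3) ℂ, eval (fun x => p₀ x.1 x.2) P ≠ 0 ∧
      ∀ p : Fin k → Fin 3 → ℂ, eval (fun x => p x.1 x.2) P ≠ 0 →
        Module.finrank ℂ (linSys p d m) ≤ Module.finrank ℂ (linSys p₀ d m) := by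
  obtain ⟨P, hP, h⟩ := exists_polynomial_finrank_ker_le
    (fun x : Fin k × Fin 3 → ℂ => formConditions d m fun i j => x (i, j))
    (fun f c => ⟨_, fun x => formConditions_apply _ f c⟩) (fun x => p₀ x.1 x.2)
  refine ⟨P, hP, fun p hp => ?_⟩
  rw [← finrank_ker_formConditions hm, ← finrank_ker_formConditions hm]
  exact h (fun x => p x.1 x.2) hp

lemma finrank_le_of_injOn {V : Type*} [AddCommGroup V] [Module ℂ V] {U W : Submodule ℂ V}
    [Module.Finite ℂ W] (T : V →ₗ[ℂ] V) (hT : ∀ f ∈ U, T f = 0 → f = 0) (hUW : ∀ f ∈ U, T f ∈ W) :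
    Module.finrank ℂ U ≤ Module.finrank ℂ W := by
  refine LinearMap.finrank_le_finrank_of_injective (f := T.restrict hUW) ?_
  refine LinearMap.ker_eq_bot.1 ((LinearMap.ker_eq_bot' (f := T.restrict hUW)).2 fun f hf => ?_)
  exact Subtype.ext (hT f f.2 (congrArg Subtype.val hf))

lemma finrank_linSys_le_of_mulVec {k : ℕ} {p q : Fin k → Fin 3 → ℂ} (d : ℕ) (m : Fin k → ℕ)
    (A : Matrix (Fin 3) (Fin 3) ℂ) (hA : IsUnit A.det) (hq : ∀ i, q i = A⁻¹.mulVec (p i)) :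
    Module.finrank ℂ (linSys q d m) ≤ Module.finrank ℂ (linSys p d m) := by
  let φ : Fin 3 → MvPolynomial (Fin 3) ℂ := fun j => ∑ k, C (A⁻¹ j k) * X k
  have hφ : ∀ x : Fin 3 → ℂ, (fun j => eval x (φ j)) = A⁻¹.mulVec x := fun x => by
    ext j
    simp [φ, Matrix.mulVec, dotProduct]
  refine finrank_le_of_injOn (bind₁ φ).toLinearMap (fun f _ h => ?_) fun f hf => ?_
  · refine MvPolynomial.funext fun y => ?_
    have h' := congrArg (eval (A.mulVec y)) h
    rw [AlgHom.toLinearMap_apply, eval_bind₁, hφ, Matrix.mulVec_mulVec,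
      Matrix.nonsing_inv_mul A hA, Matrix.one_mulVec] at h'
    simpa using h'
  · rw [mem_linSys] at hf ⊢
    refine ⟨?_, fun i => VanishesToOrder.bind₁ φ ?_⟩
    · have := hf.1.aeval φ (n := 1) fun j =>
        IsHomogeneous.sum _ _ _ fun k _ => isHomogeneous_C_mul_X _ _
      rwa [one_mul] at this
    · rw [hφ, ← hq]
      exact hf.2 i

/-- The determinant of three points, as a polynomial in the coordinates of all points. -/
noncomputable def detPolynomial {k : ℕ} (v : Fin 3 → Fin k) : MvPolynomial (Fin k × Fin 3) ℂ :=
  (Matrix.of fun r t => X (v t, r)).det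

lemma eval_detPolynomial {k : ℕ} (v : Fin 3 → Fin k) (p : Fin k → Fin 3 → ℂ) :
    eval (fun x => p x.1 x.2) (detPolynomial v) = (Matrix.of fun r t => p (v t) r).det := by
  rw [detPolynomial, RingHom.map_det]
  congr 1
  ext r t
  exact eval_X _

lemma detPolynomial_ne_zero {k : ℕ} {v : Fin 3 → Fin k} (hv : Function.Injective v) :
    detPolynomial v ≠ 0 := by
  intro h
  have := eval_detPolynomial v fun i r => if v r = i then 1 else 0
  rw [h, map_zero] at this
  have h1 : (Matrix.of fun r t => if v r = v t then (1 : ℂ) else 0 : Matrix (Fin 3) (Fin 3) ℂ) =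
      1 := by
    ext r t
    simp [Matrix.one_apply, hv.eq_iff]
  rw [h1, Matrix.det_one] at this
  exact zero_ne_one this

lemma injective_update {k : ℕ} {v : Fin 3 → Fin k} (hv : Function.Injective v) (s : Fin 3)
    {i : Fin k} (hi : i ∉ Set.range v) : Function.Injective (Function.update v s i) := by
  intro a b hab
  simp only [Function.update_apply] at hab
  split_ifs at hab with h1 h2 h2
  · rw [h1, h2]
  · exact absurd ⟨b, hab.symm⟩ hi
  · exact absurd ⟨a, hab⟩ hi
  · exact hv hab

lemma exists_normalized {k d N : ℕ} {m : Fin k → ℕ} (hm : ∀ i, m i ≤ d + 1)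
    (h : ∃ p, Module.finrank ℂ (linSys p d m) ≤ N) {v : Fin 3 → Fin k}
    (hv : Function.Injective v) :
    ∃ q : Fin k → Fin 3 → ℂ, Module.finrank ℂ (linSys q d m) ≤ N ∧
      (∀ s, q (v s) = Pi.single s 1) ∧ ∀ i ∉ Set.range v, ∀ s, q i s ≠ 0 := by
  classical
  obtain ⟨p₀, hp₀⟩ := h
  obtain ⟨P, hP, hPle⟩ := exists_polynomial_finrank_linSys_le p₀ hm
  let R := P * detPolynomial v *
    ∏ i ∈ Finset.univ.filter (· ∉ Set.range v), ∏ s, detPolynomial (Function.update v s i)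
  have hR : R ≠ 0 := by
    refine mul_ne_zero (mul_ne_zero ?_ (detPolynomial_ne_zero hv)) ?_
    · rintro rfl
      simp at hP
    · refine Finset.prod_ne_zero_iff.2 fun i hi => Finset.prod_ne_zero_iff.2 fun s _ => ?_
      exact detPolynomial_ne_zero (injective_update hv s (Finset.mem_filter.1 hi).2)
  obtain ⟨x, hx⟩ : ∃ x, eval x R ≠ 0 := by
    by_contra! H
    exact hR (MvPolynomial.funext fun x => by rw [H x, map_zero])
  let p : Fin k → Fin 3 → ℂ := fun i j => x (i, j)
  have hx' : eval (fun y => p y.1 y.2) R ≠ 0 := hx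
  simp only [R, map_mul, map_prod, mul_ne_zero_iff, Finset.prod_ne_zero_iff, Finset.mem_filter,
    Finset.mem_univ, true_and, true_imp_iff, eval_detPolynomial] at hx'
  obtain ⟨⟨hPx, hdet⟩, hupd⟩ := hx'
  set A : Matrix (Fin 3) (Fin 3) ℂ := Matrix.of fun r t => p (v t) r with hA
  have hunit : IsUnit A.det := isUnit_iff_ne_zero.2 hdet
  refine ⟨fun i => A⁻¹.mulVec (p i), ?_, fun s => ?_, fun i hi s => ?_⟩
  · exact ((finrank_linSys_le_of_mulVec d m A hunit fun i => rfl).trans (hPle p hPx)).trans hp₀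
  · have : p (v s) = A.mulVec (Pi.single s 1) := by
      ext r
      simp [hA]
    change A⁻¹.mulVec (p (v s)) = _
    rw [this, Matrix.mulVec_mulVec, Matrix.nonsing_inv_mul A hunit, Matrix.one_mulVec]
  · have h1 : A.det • A⁻¹.mulVec (p i) = A.cramer (p i) := A.det_smul_inv_mulVec_eq_cramer _ hunit
    have h2 := congrFun h1 s
    intro h0
    change A⁻¹.mulVec (p i) s = 0 at h0
    rw [Pi.smul_apply, h0, smul_zero, Matrix.cramer_apply] at h2
    refine hupd i hi s ?_
    rw [h2]
    congr 1
    ext r t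
    rw [Matrix.updateCol_apply, Matrix.of_apply, Function.update_apply]
    split_ifs <;> rfl

lemma VanishesToOrder.prod {q : Fin 3 → ℂ} {ι : Type*} (s : Finset ι) {n : ι → ℕ}
    {F : ι → MvPolynomial (Fin 3) ℂ} (h : ∀ j ∈ s, VanishesToOrder q (n j) (F j)) :
    VanishesToOrder q (∑ j ∈ s, n j) (∏ j ∈ s, F j) := by
  classical
  induction s using Finset.induction_on with
  | empty => simp [VanishesToOrder]
  | insert a s ha ih =>
    rw [Finset.sum_insert ha, Finset.prod_insert ha]
    exact (h a (Finset.mem_insert_self a s)).mul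
      (ih fun j hj => h j (Finset.mem_insert_of_mem hj))

lemma vanishesToOrder_monomial (s : Fin 3) (a : Fin 3 →₀ ℕ) (c : ℂ) :
    VanishesToOrder (Pi.single s 1) (a.degree - a s) (monomial a c) := by
  rw [monomial_eq, Finsupp.prod_fintype _ _ (by simp)]
  refine VanishesToOrder.mul_left _ (VanishesToOrder.mono (m := ∑ j, if j = s then 0 else a j) ?_
    (VanishesToOrder.prod _ fun j _ => ?_))
  · rw [Finsupp.degree_eq_sum]
    fin_cases s <;> simp [Fin.sum_univ_three] <;> omega
  · split_ifs with h
    · trivial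
    · have : VanishesToOrder (Pi.single s 1) 1 (X j : MvPolynomial (Fin 3) ℂ) :=
        ⟨by simp [h], fun _ => trivial⟩
      simpa using this.pow (a j)

lemma eval_single_of_isHomogeneous {f : MvPolynomial (Fin 3) ℂ} {d : ℕ} (hf : f.IsHomogeneous d)
    (s : Fin 3) : eval (Pi.single s 1) f = coeff (Finsupp.single s d) f := by
  rw [eval_eq', Finset.sum_eq_single (Finsupp.single s d)]
  · rw [Finset.prod_eq_one, mul_one]
    intro j _
    rcases eq_or_ne j s with rfl | h <;> simp [*]
  · intro a ha hne
    obtain ⟨t, hts, ht⟩ : ∃ t, t ≠ s ∧ a t ≠ 0 := by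
      by_contra! H
      have h1 : a = Finsupp.single s (a s) := by
        ext t
        rcases eq_or_ne t s with rfl | h
        · simp
        · simp [h.symm, H t h]
      have h2 := hf.degree_eq_sum_deg_support ha
      rw [← Finsupp.degree_apply, h1, Finsupp.degree_single] at h2
      exact hne (by rw [h1, ← h2])
    rw [Finset.prod_eq_zero (Finset.mem_univ t) (by simp [hts, ht]), mul_zero]
  · intro h
    rw [notMem_support_iff.1 h, zero_mul]

lemma coeff_eq_zero_of_vanishesToOrder {s : Fin 3} {m d : ℕ} {f : MvPolynomial (Fin 3) ℂ}
    (hf : f.IsHomogeneous d) (h : VanishesToOrder (Pi.single s 1) m f) {a : Fin 3 →₀ ℕ}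
    (ha : d < a s + m) : coeff a f = 0 := by
  by_cases hd : a.degree = d
  swap
  · exact hf.coeff_eq_zero hd
  induction m generalizing f d a with
  | zero =>
    have := Finsupp.le_degree s a
    omega
  | succ m ih =>
    by_cases H : ∃ t, t ≠ s ∧ a t ≠ 0
    · obtain ⟨t, hts, ht⟩ := H
      obtain ⟨b, rfl⟩ : ∃ b, a = b + Finsupp.single t 1 :=
        ⟨a - Finsupp.single t 1, (tsub_add_cancel_of_le
          (Finsupp.single_le_iff.2 (Nat.one_le_iff_ne_zero.2 ht))).symm⟩
      simp only [map_add, Finsupp.degree_single, Finsupp.add_apply,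
        Finsupp.single_apply, hts, if_false, add_zero] at hd ha
      have := ih hf.pderiv (h.2 t) (a := b) (by omega) (by omega)
      rw [coeff_pderiv] at this
      exact (mul_eq_zero.1 this).resolve_right (by norm_cast)
    · push Not at H
      have h1 : a = Finsupp.single s (a s) := by
        ext t
        rcases eq_or_ne t s with rfl | h
        · simp
        · simp [h.symm, H t h]
      rw [h1, Finsupp.degree_single] at hd
      rw [h1, hd, ← eval_single_of_isHomogeneous hf]
      exact h.1

/-- The components of the standard quadratic Cremona transformation. -/
noncomputable def cremona : Fin 3 → MvPolynomial (Fin 3) ℂ :=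
  ![X 1 * X 2, X 0 * X 2, X 0 * X 1]

lemma eq_zero_of_bind₁_cremona_eq_zero {f : MvPolynomial (Fin 3) ℂ} {d : ℕ}
    (hf : f.IsHomogeneous d) (h : bind₁ cremona f = 0) : f = 0 := by
  have key : (X 0 * X 1 * X 2 : MvPolynomial (Fin 3) ℂ) ^ d * f = 0 := by
    refine MvPolynomial.funext fun y => ?_
    have h1 := congrArg (fun g => eval y (bind₁ cremona g)) h
    simp only [eval_bind₁, map_zero] at h1
    have h2 : (fun j => eval (fun i => eval y (cremona i)) (cremona j)) =
        (y 0 * y 1 * y 2) • y := by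
      ext j
      fin_cases j <;> simp [cremona] <;> ring
    rw [h2] at h1
    rw [map_zero, ← h1, eval_eq' _ f, eval_mul, eval_eq' y f, Finset.mul_sum]
    refine Finset.sum_congr rfl fun a ha => ?_
    have h3 := hf.degree_eq_sum_deg_support ha
    rw [← Finsupp.degree_apply, Finsupp.degree_eq_sum] at h3
    have h4 : ∏ i, ((y 0 * y 1 * y 2) • y) i ^ a i =
        (y 0 * y 1 * y 2) ^ d * ∏ i, y i ^ a i := by
      rw [h3, ← Finset.prod_pow_eq_pow_sum, ← Finset.prod_mul_distrib]
      exact Finset.prod_congr rfl fun i _ => mul_pow _ _ _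
    rw [h4]
    simp only [map_mul, map_pow, eval_X]
    ring
  exact (mul_eq_zero.1 key).resolve_left
    (pow_ne_zero _ (mul_ne_zero (mul_ne_zero (X_ne_zero _) (X_ne_zero _)) (X_ne_zero _)))

lemma bind₁_cremona_monomial {α b : Fin 3 →₀ ℕ} {a : Fin 3 → ℕ}
    (h : ∀ s, α s + a s + b s = α.degree) (c : ℂ) :
    bind₁ cremona (monomial α c) = (∏ s, X s ^ a s) * monomial b c := by
  have h0 := h 0
  have h1 := h 1
  have h2 := h 2
  rw [Finsupp.degree_eq_sum, Fin.sum_univ_three] at h0 h1 h2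
  refine MvPolynomial.funext fun y => ?_
  rw [eval_bind₁, eval_monomial, eval_mul, eval_monomial, Finsupp.prod_fintype _ _ (by simp),
    Finsupp.prod_fintype _ _ (by simp)]
  simp only [cremona, Fin.prod_univ_three, Matrix.cons_val_zero, Matrix.cons_val_one,
    Matrix.cons_val, map_mul, map_pow, eval_X]
  calc c * ((y 1 * y 2) ^ α 0 * (y 0 * y 2) ^ α 1 * (y 0 * y 1) ^ α 2)
      = c * (y 0 ^ (α 1 + α 2) * y 1 ^ (α 0 + α 2) * y 2 ^ (α 0 + α 1)) := by ring
    _ = c * (y 0 ^ (a 0 + b 0) * y 1 ^ (a 1 + b 1) * y 2 ^ (a 2 + b 2)) := by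
      rw [show α 1 + α 2 = a 0 + b 0 by omega, show α 0 + α 2 = a 1 + b 1 by omega,
        show α 0 + α 1 = a 2 + b 2 by omega]
    _ = _ := by ring

/-- Forms with multiplicity `a s` at the coordinate points are, after the standard quadratic
transformation, divisible by the corresponding monomial. -/
lemma exists_bind₁_cremona_eq {f : MvPolynomial (Fin 3) ℂ} {d d' : ℕ} {a : Fin 3 → ℕ}
    (hd : d' + ∑ s, a s = 2 * d) (hf : f.IsHomogeneous d)
    (h : ∀ s, VanishesToOrder (Pi.single s 1) (a s) f) :
    ∃ g : MvPolynomial (Fin 3) ℂ, bind₁ cremona f = (∏ s, X s ^ a s) * g ∧ g.IsHomogeneous d' ∧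
      ∀ s, VanishesToOrder (Pi.single s 1) (d + a s - ∑ t, a t) g := by
  let T : (Fin 3 →₀ ℕ) → (Fin 3 →₀ ℕ) := fun α =>
    Finsupp.equivFunOnFinite.symm fun s => d - α s - a s
  have hT : ∀ α ∈ f.support, α.degree = d ∧ ∀ s, α s + a s + T α s = d := fun α hα => by
    refine ⟨hf.degree_eq_sum_deg_support hα ▸ rfl, fun s => ?_⟩
    have : α s + a s ≤ d := by
      by_contra! hlt
      exact mem_support_iff.1 hα (coeff_eq_zero_of_vanishesToOrder hf (h s) hlt)
    change α s + a s + (d - α s - a s) = d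
    omega
  refine ⟨∑ α ∈ f.support, monomial (T α) (coeff α f), ?_, ?_, fun s => ?_⟩
  · conv_lhs => rw [f.as_sum, map_sum]
    rw [Finset.mul_sum]
    refine Finset.sum_congr rfl fun α hα => bind₁_cremona_monomial (fun s => ?_) _
    rw [(hT α hα).1, (hT α hα).2]
  · refine IsHomogeneous.sum _ _ _ fun α hα => isHomogeneous_monomial _ ?_
    obtain ⟨h1, h2⟩ := hT α hα
    have h3 := h2 0
    have h4 := h2 1
    have h5 := h2 2
    rw [Finsupp.degree_eq_sum, Fin.sum_univ_three] at h1 ⊢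
    rw [Fin.sum_univ_three] at hd
    omega
  · refine VanishesToOrder.sum _ fun α hα => (vanishesToOrder_monomial s _ _).mono ?_
    obtain ⟨h1, h2⟩ := hT α hα
    have h3 := h2 0
    have h4 := h2 1
    have h5 := h2 2
    rw [Finsupp.degree_eq_sum, Fin.sum_univ_three] at h1 ⊢
    rw [Fin.sum_univ_three]
    fin_cases s <;> simp <;> omega

/-- Upper bounds on the dimension of a linear system at one configuration of points can be
transported along a quadratic Cremona transformation based at the points `v 0, v 1, v 2`. -/
lemma exists_finrank_linSys_le_of_cremona {k d d' N : ℕ} {m m' : Fin k → ℕ} {v : Fin 3 → Fin k}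
    (hv : Function.Injective v) (hd : d' + ∑ s, m (v s) = 2 * d)
    (hmv : ∀ s, m' (v s) ≤ d + m (v s) - ∑ t, m (v t))
    (hm : ∀ i ∉ Set.range v, m' i ≤ m i) (hm' : ∀ i, m' i ≤ d' + 1)
    (h : ∃ p, Module.finrank ℂ (linSys p d' m') ≤ N) :
    ∃ p, Module.finrank ℂ (linSys p d m) ≤ N := by
  classical
  obtain ⟨q, hq, hqv, hqi⟩ := exists_normalized hm' h hv
  let p : Fin k → Fin 3 → ℂ := fun i =>
    if i ∈ Set.range v then q i else fun s => eval (q i) (cremona s)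
  have hpv : ∀ s, p (v s) = Pi.single s 1 := fun s => by simp [p, hqv]
  have hpi : ∀ i ∉ Set.range v, p i = fun s => eval (q i) (cremona s) := fun i hi => if_neg hi
  refine ⟨p, le_trans ?_ hq⟩
  let M : MvPolynomial (Fin 3) ℂ := ∏ s, X s ^ m (v s)
  refine le_trans (finrank_le_of_injOn (W := (linSys q d' m').map (LinearMap.mulLeft ℂ M))
    (bind₁ cremona).toLinearMap (fun f hf h0 => ?_) fun f hf => ?_)
    (Submodule.finrank_map_le _ _)
  · exact eq_zero_of_bind₁_cremona_eq_zero (mem_linSys.1 hf).1 h0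
  · obtain ⟨hf1, hf2⟩ := mem_linSys.1 hf
    obtain ⟨g, hg, hgd, hgv⟩ := exists_bind₁_cremona_eq (a := fun s => m (v s)) hd hf1
      fun s => hpv s ▸ hf2 (v s)
    refine ⟨g, mem_linSys.2 ⟨hgd, fun i => ?_⟩, hg.symm⟩
    by_cases hi : i ∈ Set.range v
    · obtain ⟨s, rfl⟩ := hi
      rw [hqv]
      exact (hgv s).mono (hmv s)
    · refine VanishesToOrder.mono (hm i hi) (VanishesToOrder.of_mul_left (g := M) ?_ ?_)
      · simp only [M, map_prod, map_pow, eval_X]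
        exact Finset.prod_ne_zero_iff.2 fun s _ => pow_ne_zero _ (hqi i hi s)
      · rw [← hg]
        refine VanishesToOrder.bind₁ cremona ?_
        rw [← hpi i hi]
        exact hf2 i

/-- The exponent vector `(i, j, d - i - j)`. -/
noncomputable def exponent (d i j : ℕ) : Fin 3 →₀ ℕ :=
  Finsupp.equivFunOnFinite.symm ![i, j, d - i - j]

lemma eq_exponent {d : ℕ} {a : Fin 3 →₀ ℕ} (ha : a.degree = d) : a = exponent d (a 0) (a 1) := by
  rw [Finsupp.degree_eq_sum, Fin.sum_univ_three] at ha
  ext s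
  fin_cases s <;> simp [exponent]
  omega

lemma eq_sum_monomial_exponent {f : MvPolynomial (Fin 3) ℂ} {d : ℕ} (hf : f.IsHomogeneous d) :
    f = ∑ i ∈ Finset.range (d + 1), ∑ j ∈ Finset.range (d + 1 - i),
      monomial (exponent d i j) (coeff (exponent d i j) f) := by
  ext a
  simp only [coeff_sum, coeff_monomial]
  by_cases ha : a.degree = d
  · have h0 := ha
    rw [Finsupp.degree_eq_sum, Fin.sum_univ_three] at h0
    have H : ∀ i j, exponent d i j = a → i = a 0 ∧ j = a 1 := by
      rintro i j rfl
      simp [exponent]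
    rw [Finset.sum_eq_single (a 0), Finset.sum_eq_single (a 1), ← eq_exponent ha, if_pos rfl]
    · exact fun j _ hj => if_neg fun h => hj (H _ _ h).2
    · intro h
      simp at h
      omega
    · exact fun i _ hi => Finset.sum_eq_zero fun j _ => if_neg fun h => hi (H _ _ h).1
    · intro h
      simp at h
      omega
  · rw [hf.coeff_eq_zero ha]
    refine (Finset.sum_eq_zero fun i hi => Finset.sum_eq_zero fun j hj => if_neg ?_).symm
    rintro rfl
    refine ha ?_
    simp only [Finset.mem_range] at hi hj
    rw [Finsupp.degree_eq_sum, Fin.sum_univ_three]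
    simp [exponent]
    omega

/-- The partial derivative `∂ₛ` at `x` of the form of degree `d` with coefficients `c`. -/
noncomputable def partialSum (d : ℕ) (c : ℕ → ℕ → ℂ) (s : Fin 3) (x : Fin 3 → ℂ) : ℂ :=
  ∑ i ∈ Finset.range (d + 1), ∑ j ∈ Finset.range (d + 1 - i),
    c i j * ((![i, j, d - i - j] s : ℕ) : ℂ) *
      ∏ t, x t ^ (![i, j, d - i - j] t - if t = s then 1 else 0)

lemma eval_pderiv_eq_partialSum {f : MvPolynomial (Fin 3) ℂ} {d : ℕ} (hf : f.IsHomogeneous d)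
    (s : Fin 3) (x : Fin 3 → ℂ) :
    eval x (pderiv s f) = partialSum d (fun i j => coeff (exponent d i j) f) s x := by
  conv_lhs => rw [eq_sum_monomial_exponent hf]
  simp only [map_sum, pderiv_monomial, eval_monomial, partialSum]
  refine Finset.sum_congr rfl fun i _ => Finset.sum_congr rfl fun j _ => ?_
  rw [Finsupp.prod_fintype _ _ (by simp)]
  refine congrArg₂ _ rfl (Finset.prod_congr rfl fun t _ => ?_)
  rw [Finsupp.tsub_apply, Finsupp.single_apply]
  simp only [exponent, eq_comm, Finsupp.coe_equivFunOnFinite_symm]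

lemma finrank_linSys_le_of_coeff {k d N : ℕ} (p : Fin k → Fin 3 → ℂ) (m : Fin k → ℕ)
    (S : Fin N → ℕ × ℕ)
    (H : ∀ c : ℕ → ℕ → ℂ, (∀ t, c (S t).1 (S t).2 = 0) →
      (∀ i, 2 ≤ m i → ∀ s, partialSum d c s (p i) = 0) → ∀ i j, i + j ≤ d → c i j = 0) :
    Module.finrank ℂ (linSys p d m) ≤ N := by
  let T : linSys p d m →ₗ[ℂ] (Fin N → ℂ) :=
    (LinearMap.pi fun t => lcoeff ℂ (exponent d (S t).1 (S t).2)) ∘ₗ (linSys p d m).subtype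
  have hT : Function.Injective T := by
    refine LinearMap.ker_eq_bot.1 (LinearMap.ker_eq_bot'.2 fun f hf => Subtype.ext ?_)
    obtain ⟨h1, h2⟩ := mem_linSys.1 f.2
    have h3 := H (fun i j => coeff (exponent d i j) f.1) (fun t => congrFun hf t)
      fun i hi s => by
        rw [← eval_pderiv_eq_partialSum h1]
        exact (((h2 i).mono hi).2 s).1
    change f.1 = 0
    rw [eq_sum_monomial_exponent h1]
    refine Finset.sum_eq_zero fun i _ => Finset.sum_eq_zero fun j hj => ?_
    rw [h3 i j (by simp at hj; omega), monomial_zero]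
  simpa using LinearMap.finrank_le_finrank_of_injective hT

/-- The multiplicity vector `(m₀, m, …, m)` on `n + 1` points. -/
def qm (n m₀ m : ℕ) : Fin (n + 1) → ℕ := fun i => if i = 0 then m₀ else m

lemma exists_finrank_quartic_le : ∃ p, Module.finrank ℂ (linSys p 4 (qm 4 0 2)) ≤ 3 := by
  refine ⟨![![0, 0, 0], ![1, 0, 0], ![0, 1, 0], ![0, 0, 1], ![1, 1, 1]], finrank_linSys_le_of_coeff _ _
    ![(0, 2), (1, 1), (2, 0)] fun c hS H => ?_⟩
  have s0 : c 0 2 = 0 := hS 0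
  have s1 : c 1 1 = 0 := hS 1
  have s2 : c 2 0 = 0 := hS 2
  have z00 : c 0 0 = 0 := by
    have := H 3 (by decide) 2
    simpa [partialSum, Finset.sum_range_succ, Fin.prod_univ_three] using this
  have z01 : c 0 1 = 0 := by
    have := H 3 (by decide) 1
    simpa [partialSum, Finset.sum_range_succ, Fin.prod_univ_three] using this
  have z03 : c 0 3 = 0 := by
    have := H 2 (by decide) 2
    simpa [partialSum, Finset.sum_range_succ, Fin.prod_univ_three] using this
  have z04 : c 0 4 = 0 := by
    have := H 2 (by decide) 1
    simpa [partialSum, Finset.sum_range_succ, Fin.prod_univ_three] using this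
  have z10 : c 1 0 = 0 := by
    have := H 3 (by decide) 0
    simpa [partialSum, Finset.sum_range_succ, Fin.prod_univ_three] using this
  have z13 : c 1 3 = 0 := by
    have := H 2 (by decide) 0
    simpa [partialSum, Finset.sum_range_succ, Fin.prod_univ_three] using this
  have z30 : c 3 0 = 0 := by
    have := H 1 (by decide) 2
    simpa [partialSum, Finset.sum_range_succ, Fin.prod_univ_three] using this
  have z31 : c 3 1 = 0 := by
    have := H 1 (by decide) 1
    simpa [partialSum, Finset.sum_range_succ, Fin.prod_univ_three] using this
  have z40 : c 4 0 = 0 := by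
    have := H 1 (by decide) 0
    simpa [partialSum, Finset.sum_range_succ, Fin.prod_univ_three] using this
  have e00 : c 1 2 + 2 * c 2 1 + 2 * c 2 2 = 0 := by
    have := H 4 (by decide) 0
    simp only [partialSum, Finset.sum_range_succ, Fin.prod_univ_three] at this
    simp [z00, z01, z03, z04, z10, z13, z30, z31, z40, s0, s1, s2] at this
    linear_combination this
  have e01 : 2 * c 1 2 + c 2 1 + 2 * c 2 2 = 0 := by
    have := H 4 (by decide) 1
    simp only [partialSum, Finset.sum_range_succ, Fin.prod_univ_three] at this
    simp [z00, z01, z03, z04, z10, z13, z30, z31, z40, s0, s1, s2] at this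
    linear_combination this
  have e02 : c 1 2 + c 2 1 = 0 := by
    have := H 4 (by decide) 2
    simp only [partialSum, Finset.sum_range_succ, Fin.prod_univ_three] at this
    simp [z00, z01, z03, z04, z10, z13, z30, z31, z40, s0, s1, s2] at this
    linear_combination this
  have r12 : c 1 2 = 0 := by
    linear_combination -1/2 * e00 + 1/2 * e01 + 1/2 * e02
  have r21 : c 2 1 = 0 := by
    linear_combination 1/2 * e00 - 1/2 * e01 + 1/2 * e02
  have r22 : c 2 2 = 0 := by
    linear_combination 1/4 * e00 + 1/4 * e01 - 3/4 * e02
  intro i j hij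
  have hi : i ≤ 4 := by omega
  have hj : j ≤ 4 - i := by omega
  interval_cases i <;> interval_cases j <;> assumption

lemma exists_finrank_quintic_le : ∃ p, Module.finrank ℂ (linSys p 5 (qm 4 0 2)) ≤ 9 := by
  refine ⟨![![0, 0, 0], ![1, 0, 0], ![0, 1, 0], ![0, 0, 1], ![1, 1, 1]], finrank_linSys_le_of_coeff _ _
    ![(0, 2), (0, 3), (1, 1), (1, 2), (1, 3), (2, 0), (2, 1), (2, 2), (3, 0)] fun c hS H => ?_⟩
  have s0 : c 0 2 = 0 := hS 0
  have s1 : c 0 3 = 0 := hS 1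
  have s2 : c 1 1 = 0 := hS 2
  have s3 : c 1 2 = 0 := hS 3
  have s4 : c 1 3 = 0 := hS 4
  have s5 : c 2 0 = 0 := hS 5
  have s6 : c 2 1 = 0 := hS 6
  have s7 : c 2 2 = 0 := hS 7
  have s8 : c 3 0 = 0 := hS 8
  have z00 : c 0 0 = 0 := by
    have := H 3 (by decide) 2
    simpa [partialSum, Finset.sum_range_succ, Fin.prod_univ_three] using this
  have z01 : c 0 1 = 0 := by
    have := H 3 (by decide) 1
    simpa [partialSum, Finset.sum_range_succ, Fin.prod_univ_three] using this
  have z04 : c 0 4 = 0 := by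
    have := H 2 (by decide) 2
    simpa [partialSum, Finset.sum_range_succ, Fin.prod_univ_three] using this
  have z05 : c 0 5 = 0 := by
    have := H 2 (by decide) 1
    simpa [partialSum, Finset.sum_range_succ, Fin.prod_univ_three] using this
  have z10 : c 1 0 = 0 := by
    have := H 3 (by decide) 0
    simpa [partialSum, Finset.sum_range_succ, Fin.prod_univ_three] using this
  have z14 : c 1 4 = 0 := by
    have := H 2 (by decide) 0
    simpa [partialSum, Finset.sum_range_succ, Fin.prod_univ_three] using this
  have z40 : c 4 0 = 0 := by
    have := H 1 (by decide) 2
    simpa [partialSum, Finset.sum_range_succ, Fin.prod_univ_three] using this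
  have z41 : c 4 1 = 0 := by
    have := H 1 (by decide) 1
    simpa [partialSum, Finset.sum_range_succ, Fin.prod_univ_three] using this
  have z50 : c 5 0 = 0 := by
    have := H 1 (by decide) 0
    simpa [partialSum, Finset.sum_range_succ, Fin.prod_univ_three] using this
  have e00 : 2 * c 2 3 + 3 * c 3 1 + 3 * c 3 2 = 0 := by
    have := H 4 (by decide) 0
    simp only [partialSum, Finset.sum_range_succ, Fin.prod_univ_three] at this
    simp [z00, z01, z04, z05, z10, z14, z40, z41, z50, s0, s1, s2, s3, s4, s5, s6, s7, s8] at this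
    linear_combination this
  have e01 : 3 * c 2 3 + c 3 1 + 2 * c 3 2 = 0 := by
    have := H 4 (by decide) 1
    simp only [partialSum, Finset.sum_range_succ, Fin.prod_univ_three] at this
    simp [z00, z01, z04, z05, z10, z14, z40, z41, z50, s0, s1, s2, s3, s4, s5, s6, s7, s8] at this
    linear_combination this
  have e02 : c 3 1 = 0 := by
    have := H 4 (by decide) 2
    simp only [partialSum, Finset.sum_range_succ, Fin.prod_univ_three] at this
    simp [z00, z01, z04, z05, z10, z14, z40, z41, z50, s0, s1, s2, s3, s4, s5, s6, s7, s8] at this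
    linear_combination this
  have r23 : c 2 3 = 0 := by
    linear_combination -2/5 * e00 + 3/5 * e01 + 3/5 * e02
  have r31 : c 3 1 = 0 := by
    linear_combination e02
  have r32 : c 3 2 = 0 := by
    linear_combination 3/5 * e00 - 2/5 * e01 - 7/5 * e02
  intro i j hij
  have hi : i ≤ 5 := by omega
  have hj : j ≤ 5 - i := by omega
  interval_cases i <;> interval_cases j <;> assumption

set_option maxHeartbeats 4000000 in
lemma exists_finrank_sextic_le : ∃ p, Module.finrank ℂ (linSys p 6 (qm 8 0 2)) ≤ 4 := by
  refine ⟨![![0, 0, 0], ![1, 0, 0], ![0, 1, 0], ![0, 0, 1], ![1, -1, 1], ![1, -1, -1], ![1, 1, 0], ![0, 1, -1], ![1, 0, -1]], finrank_linSys_le_of_coeff _ _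
    ![(0, 2), (2, 0), (2, 4), (3, 2)] fun c hS H => ?_⟩
  have s0 : c 0 2 = 0 := hS 0
  have s1 : c 2 0 = 0 := hS 1
  have s2 : c 2 4 = 0 := hS 2
  have s3 : c 3 2 = 0 := hS 3
  have z00 : c 0 0 = 0 := by
    have := H 3 (by decide) 2
    simpa [partialSum, Finset.sum_range_succ, Fin.prod_univ_three] using this
  have z01 : c 0 1 = 0 := by
    have := H 3 (by decide) 1
    simpa [partialSum, Finset.sum_range_succ, Fin.prod_univ_three] using this
  have z05 : c 0 5 = 0 := by
    have := H 2 (by decide) 2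
    simpa [partialSum, Finset.sum_range_succ, Fin.prod_univ_three] using this
  have z06 : c 0 6 = 0 := by
    have := H 2 (by decide) 1
    simpa [partialSum, Finset.sum_range_succ, Fin.prod_univ_three] using this
  have z10 : c 1 0 = 0 := by
    have := H 3 (by decide) 0
    simpa [partialSum, Finset.sum_range_succ, Fin.prod_univ_three] using this
  have z15 : c 1 5 = 0 := by
    have := H 2 (by decide) 0
    simpa [partialSum, Finset.sum_range_succ, Fin.prod_univ_three] using this
  have z50 : c 5 0 = 0 := by
    have := H 1 (by decide) 2
    simpa [partialSum, Finset.sum_range_succ, Fin.prod_univ_three] using this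
  have z51 : c 5 1 = 0 := by
    have := H 1 (by decide) 1
    simpa [partialSum, Finset.sum_range_succ, Fin.prod_univ_three] using this
  have z60 : c 6 0 = 0 := by
    have := H 1 (by decide) 0
    simpa [partialSum, Finset.sum_range_succ, Fin.prod_univ_three] using this
  have e00 : -c 1 1 + c 1 2 - c 1 3 + c 1 4 - 2 * c 2 1 + 2 * c 2 2 - 2 * c 2 3 + 3 * c 3 0 - 3 * c 3 1 - 3 * c 3 3 + 4 * c 4 0 - 4 * c 4 1 + 4 * c 4 2 = 0 := by
    have := H 4 (by decide) 0
    simp only [partialSum, Finset.sum_range_succ, Fin.prod_univ_three] at this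
    simp [z00, z01, z05, z06, z10, z15, z50, z51, z60, s0, s1, s2, s3] at this
    linear_combination this
  have e01 : 3 * c 0 3 - 4 * c 0 4 + c 1 1 - 2 * c 1 2 + 3 * c 1 3 - 4 * c 1 4 + c 2 1 - 2 * c 2 2 + 3 * c 2 3 + c 3 1 + 3 * c 3 3 + c 4 1 - 2 * c 4 2 = 0 := by
    have := H 4 (by decide) 1
    simp only [partialSum, Finset.sum_range_succ, Fin.prod_univ_three] at this
    simp [z00, z01, z05, z06, z10, z15, z50, z51, z60, s0, s1, s2, s3] at this
    linear_combination this
  have e02 : -3 * c 0 3 + 2 * c 0 4 - 4 * c 1 1 + 3 * c 1 2 - 2 * c 1 3 + c 1 4 - 3 * c 2 1 + 2 * c 2 2 - c 2 3 + 3 * c 3 0 - 2 * c 3 1 + 2 * c 4 0 - c 4 1 = 0 := by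
    have := H 4 (by decide) 2
    simp only [partialSum, Finset.sum_range_succ, Fin.prod_univ_three] at this
    simp [z00, z01, z05, z06, z10, z15, z50, z51, z60, s0, s1, s2, s3] at this
    linear_combination this
  have e10 : -c 1 1 - c 1 2 - c 1 3 - c 1 4 + 2 * c 2 1 + 2 * c 2 2 + 2 * c 2 3 - 3 * c 3 0 - 3 * c 3 1 - 3 * c 3 3 + 4 * c 4 0 + 4 * c 4 1 + 4 * c 4 2 = 0 := by
    have := H 5 (by decide) 0
    simp only [partialSum, Finset.sum_range_succ, Fin.prod_univ_three] at this
    simp [z00, z01, z05, z06, z10, z15, z50, z51, z60, s0, s1, s2, s3] at this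
    linear_combination this
  have e11 : -3 * c 0 3 - 4 * c 0 4 + c 1 1 + 2 * c 1 2 + 3 * c 1 3 + 4 * c 1 4 - c 2 1 - 2 * c 2 2 - 3 * c 2 3 + c 3 1 + 3 * c 3 3 - c 4 1 - 2 * c 4 2 = 0 := by
    have := H 5 (by decide) 1
    simp only [partialSum, Finset.sum_range_succ, Fin.prod_univ_three] at this
    simp [z00, z01, z05, z06, z10, z15, z50, z51, z60, s0, s1, s2, s3] at this
    linear_combination this
  have e12 : -3 * c 0 3 - 2 * c 0 4 + 4 * c 1 1 + 3 * c 1 2 + 2 * c 1 3 + c 1 4 - 3 * c 2 1 - 2 * c 2 2 - c 2 3 + 3 * c 3 0 + 2 * c 3 1 - 2 * c 4 0 - c 4 1 = 0 := by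
    have := H 5 (by decide) 2
    simp only [partialSum, Finset.sum_range_succ, Fin.prod_univ_three] at this
    simp [z00, z01, z05, z06, z10, z15, z50, z51, z60, s0, s1, s2, s3] at this
    linear_combination this
  have e20 : 3 * c 3 3 + 4 * c 4 2 = 0 := by
    have := H 6 (by decide) 0
    simp only [partialSum, Finset.sum_range_succ, Fin.prod_univ_three] at this
    simp [z00, z01, z05, z06, z10, z15, z50, z51, z60, s0, s1, s2, s3] at this
    linear_combination this
  have e21 : 3 * c 3 3 + 2 * c 4 2 = 0 := by
    have := H 6 (by decide) 1
    simp only [partialSum, Finset.sum_range_succ, Fin.prod_univ_three] at this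
    simp [z00, z01, z05, z06, z10, z15, z50, z51, z60, s0, s1, s2, s3] at this
    linear_combination this
  have e22 : c 1 4 + c 2 3 + c 4 1 = 0 := by
    have := H 6 (by decide) 2
    simp only [partialSum, Finset.sum_range_succ, Fin.prod_univ_three] at this
    simp [z00, z01, z05, z06, z10, z15, z50, z51, z60, s0, s1, s2, s3] at this
    linear_combination this
  have e30 : c 1 1 - c 1 2 + c 1 3 - c 1 4 = 0 := by
    have := H 7 (by decide) 0
    simp only [partialSum, Finset.sum_range_succ, Fin.prod_univ_three] at this
    simp [z00, z01, z05, z06, z10, z15, z50, z51, z60, s0, s1, s2, s3] at this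
    linear_combination this
  have e31 : -3 * c 0 3 + 4 * c 0 4 = 0 := by
    have := H 7 (by decide) 1
    simp only [partialSum, Finset.sum_range_succ, Fin.prod_univ_three] at this
    simp [z00, z01, z05, z06, z10, z15, z50, z51, z60, s0, s1, s2, s3] at this
    linear_combination this
  have e32 : 3 * c 0 3 - 2 * c 0 4 = 0 := by
    have := H 7 (by decide) 2
    simp only [partialSum, Finset.sum_range_succ, Fin.prod_univ_three] at this
    simp [z00, z01, z05, z06, z10, z15, z50, z51, z60, s0, s1, s2, s3] at this
    linear_combination this
  have e40 : -3 * c 3 0 + 4 * c 4 0 = 0 := by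
    have := H 8 (by decide) 0
    simp only [partialSum, Finset.sum_range_succ, Fin.prod_univ_three] at this
    simp [z00, z01, z05, z06, z10, z15, z50, z51, z60, s0, s1, s2, s3] at this
    linear_combination this
  have e41 : c 1 1 - c 2 1 + c 3 1 - c 4 1 = 0 := by
    have := H 8 (by decide) 1
    simp only [partialSum, Finset.sum_range_succ, Fin.prod_univ_three] at this
    simp [z00, z01, z05, z06, z10, z15, z50, z51, z60, s0, s1, s2, s3] at this
    linear_combination this
  have e42 : 3 * c 3 0 - 2 * c 4 0 = 0 := by
    have := H 8 (by decide) 2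
    simp only [partialSum, Finset.sum_range_succ, Fin.prod_univ_three] at this
    simp [z00, z01, z05, z06, z10, z15, z50, z51, z60, s0, s1, s2, s3] at this
    linear_combination this
  have r03 : c 0 3 = 0 := by
    linear_combination 1/3 * e31 + 2/3 * e32
  have r04 : c 0 4 = 0 := by
    linear_combination 1/2 * e31 + 1/2 * e32
  have r11 : c 1 1 = 0 := by
    linear_combination 1/12 * e00 - 1/12 * e01 - 1/6 * e02 + 1/12 * e10 - 1/12 * e11 + 1/6 * e12 - 5/6 * e20 + 7/6 * e21
  have r12 : c 1 2 = 0 := by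
    linear_combination 1/16 * e00 + 7/16 * e01 - 1/16 * e02 + 15/16 * e10 + 9/16 * e11 - 1/16 * e12 - e20 + e21 - 3/2 * e22 - 2 * e30 + 2 * e31 + 2 * e32 - e40 + 2 * e41
  have r13 : c 1 3 = 0 := by
    linear_combination 1/24 * e00 + 11/24 * e01 + 1/24 * e02 + 19/24 * e10 + 17/24 * e11 - 7/24 * e12 - 1/6 * e20 - 1/6 * e21 - e22 - e30 + 2 * e31 + 2 * e32 - e40 + 2 * e41
  have r14 : c 1 4 = 0 := by
    linear_combination 1/16 * e00 - 1/16 * e01 - 1/16 * e02 - 1/16 * e10 + 1/16 * e11 - 1/16 * e12 + 1/2 * e22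
  have r21 : c 2 1 = 0 := by
    linear_combination 5/48 * e00 + 19/48 * e01 - 13/48 * e02 + 43/48 * e10 + 29/48 * e11 - 13/48 * e12 - e20 + e21 - 3/2 * e22 - 2 * e30 + 5/3 * e31 + 4/3 * e32 - 2/3 * e40 + 2 * e41 + 2/3 * e42
  have r22 : c 2 2 = 0 := by
    linear_combination 1/2 * e01 + 3/2 * e10 + e11 - 1/2 * e12 - 3/2 * e20 + 3/2 * e21 - 2 * e22 - 2 * e30 + 5/2 * e31 + 5/2 * e32 - 3/2 * e40 + 4 * e41 + 1/2 * e42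
  have r23 : c 2 3 = 0 := by
    linear_combination 1/6 * e00 + 1/3 * e01 - 1/12 * e02 + 1/3 * e10 + 1/6 * e11 - 1/12 * e12 - 1/2 * e20 + 1/2 * e21 - e30 + 2/3 * e31 + 1/3 * e32 - 2/3 * e40 + e41 - 1/3 * e42
  have r30 : c 3 0 = 0 := by
    linear_combination 1/3 * e40 + 2/3 * e42
  have r31 : c 3 1 = 0 := by
    linear_combination -5/24 * e00 + 5/24 * e01 + 1/24 * e02 + 13/24 * e10 + 11/24 * e11 - 7/24 * e12 + 1/3 * e20 - 2/3 * e21 - e22 - e30 + e31 + e32 + 2 * e41 + e42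
  have r33 : c 3 3 = 0 := by
    linear_combination -1/3 * e20 + 2/3 * e21
  have r40 : c 4 0 = 0 := by
    linear_combination 1/2 * e40 + 1/2 * e42
  have r41 : c 4 1 = 0 := by
    linear_combination -11/48 * e00 - 13/48 * e01 + 7/48 * e02 - 13/48 * e10 - 11/48 * e11 + 7/48 * e12 + 1/2 * e20 - 1/2 * e21 + 1/2 * e22 + e30 - 2/3 * e31 - 1/3 * e32 + 2/3 * e40 - e41 + 1/3 * e42
  have r42 : c 4 2 = 0 := by
    linear_combination 1/2 * e20 - 1/2 * e21
  intro i j hij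
  have hi : i ≤ 6 := by omega
  have hj : j ≤ 6 - i := by omega
  interval_cases i <;> interval_cases j <;> assumption

lemma exists_finrank_linSys_le_of_succ {n d N : ℕ} (hd : 1 ≤ d)
    (h : ∃ p, Module.finrank ℂ (linSys p d (qm (n + 1) 0 2)) ≤ N) :
    ∃ p, Module.finrank ℂ (linSys p d (qm n 0 2)) ≤ N + 3 := by
  obtain ⟨p, hp⟩ := h
  have h1 := finrank_linSys_castSucc_le p d (qm (n + 1) 0 2) (by simp [qm]; omega)
  have h2 : qm (n + 1) 0 2 ∘ Fin.castSucc = qm n 0 2 := by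
    ext i
    simp [qm]
  rw [h2] at h1
  exact ⟨_, h1.trans (Nat.add_le_add hp (by simp [qm]))⟩

/-- The multiplicity vector `(a, 2, …, 2, 6, …, 6)` on `n + 1` points, with `2 * t` entries `2`. -/
def qmMixed (n t a : ℕ) : Fin (n + 1) → ℕ :=
  fun i => if i.val = 0 then a else if i.val ≤ 2 * t then 2 else 6

lemma exists_finrank_linSys_qmMixed_le {n t a N : ℕ} (ht : 2 * t + 2 ≤ n)
    (ha : 1 ≤ a ∨ n = 2 * t + 2)
    (h : ∃ p, Module.finrank ℂ (linSys p (a + 4) (qmMixed n (t + 1) (a - 4))) ≤ N) :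
    ∃ p, Module.finrank ℂ (linSys p (a + 8) (qmMixed n t a)) ≤ N := by
  have hv : Function.Injective
      (![0, ⟨2 * t + 1, by omega⟩, ⟨2 * t + 2, by omega⟩] : Fin 3 → Fin (n + 1)) := by
    intro i j
    fin_cases i <;> fin_cases j <;> simp [Fin.ext_iff]
  refine exists_finrank_linSys_le_of_cremona hv ?_ ?_ ?_ ?_ h
  · simp [Fin.sum_univ_three, qmMixed]
    omega
  · intro s
    fin_cases s <;> simp [Fin.sum_univ_three, qmMixed, mul_add]
    omega
  · intro i hi
    have h0 : i.val ≠ 0 := fun h => hi ⟨0, Fin.ext h.symm⟩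
    have h1 : i.val ≠ 2 * t + 1 := fun h => hi ⟨1, Fin.ext h.symm⟩
    have h2 : i.val ≠ 2 * t + 2 := fun h => hi ⟨2, Fin.ext h.symm⟩
    simp only [qmMixed, if_neg h0]
    split_ifs <;> omega
  · intro i
    have := i.isLt
    simp only [qmMixed]
    split_ifs <;> omega

lemma exists_finrank_linSys_qmMixed_le_of_qm {n b N : ℕ} (hb : b ≤ 4)
    (h : ∃ p, Module.finrank ℂ (linSys p (b + 4) (qm n 0 2)) ≤ N) (r : ℕ) :
    ∀ t, n = 2 * (t + r + 1) →
      ∃ p, Module.finrank ℂ (linSys p (4 * r + b + 8) (qmMixed n t (4 * r + b))) ≤ N := by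
  induction r with
  | zero =>
    intro t hn
    refine exists_finrank_linSys_qmMixed_le (by omega) (by omega) ?_
    have : qmMixed n (t + 1) (4 * 0 + b - 4) = qm n 0 2 := by
      ext i
      have := i.isLt
      simp only [qmMixed, qm, ← Fin.val_eq_zero_iff]
      split_ifs <;> omega
    rwa [this, mul_zero, zero_add]
  | succ r ih =>
    intro t hn
    refine exists_finrank_linSys_qmMixed_le (by omega) (by omega) ?_
    rw [show 4 * (r + 1) + b + 4 = 4 * r + b + 8 by omega,
      show 4 * (r + 1) + b - 4 = 4 * r + b by omega]
    exact ih (t + 1) (by omega)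

lemma exists_finrank_linSys_qh_le {e b d m₀ N : ℕ} (he : 1 ≤ e) (hb : b ≤ 4)
    (hd : d = 4 * e + (b + 4)) (hm₀ : m₀ = 4 * (e - 1) + b)
    (h : ∃ p, Module.finrank ℂ (linSys p (b + 4) (qm (2 * e) 0 2)) ≤ N) :
    ∃ p, Module.finrank ℂ (linSys p d (qh (2 * e) m₀)) ≤ N := by
  have h1 := exists_finrank_linSys_qmMixed_le_of_qm hb h (e - 1) 0 (by omega)
  have h2 : qmMixed (2 * e) 0 m₀ = qh (2 * e) m₀ := by
    ext i
    simp only [qmMixed, qh, ← Fin.val_eq_zero_iff]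
    split_ifs <;> omega
  rwa [← hm₀, h2, show m₀ + 8 = d by omega] at h1

lemma finrank_linSys_le_of_mem {k d e : ℕ} {p : Fin k → Fin 3 → ℂ} {m mC : Fin k → ℕ}
    {F : MvPolynomial (Fin 3) ℂ} (hF : F ∈ linSys p e mC) (h0 : F ≠ 0) (r : ℕ) :
    Module.finrank ℂ (linSys p d m) ≤
      Module.finrank ℂ (linSys p (r * e + d) fun i => r * mC i + m i) := by
  obtain ⟨hF1, hF2⟩ := mem_linSys.1 hF
  refine finrank_le_of_injOn (LinearMap.mulLeft ℂ (F ^ r)) (fun f _ h => ?_) fun f hf => ?_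
  · exact (mul_eq_zero.1 h).resolve_left (pow_ne_zero r h0)
  · obtain ⟨hf1, hf2⟩ := mem_linSys.1 hf
    refine mem_linSys.2 ⟨?_, fun i => ((hF2 i).pow r).mul (hf2 i)⟩
    have := (hF1.pow r).mul hf1
    rwa [mul_comm e r] at this

lemma sum_choose_qm (n a b : ℕ) :
    ∑ i, (qm n a b i + 1).choose 2 = (a + 1).choose 2 + n * (b + 1).choose 2 := by
  rw [Fin.sum_univ_succ]
  simp [qm, Fin.succ_ne_zero]

lemma exists_mem_linSys_qm_one {e : ℕ} (he : 1 ≤ e) (p : Fin (2 * e + 1) → Fin 3 → ℂ) :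
    ∃ F ∈ linSys p e (qm (2 * e) (e - 1) 1), F ≠ 0 := by
  have h := choose_le_finrank_linSys p (d := e) (m := qm (2 * e) (e - 1) 1) fun i => by
    simp only [qm]
    split_ifs <;> omega
  rw [sum_choose_qm, Nat.sub_add_cancel he, Nat.choose_self] at h
  have h1 : (e + 2).choose 2 = (e + 1).choose 1 + (e + 1).choose 2 := Nat.choose_succ_succ' _ _
  have h2 : (e + 1).choose 2 = e.choose 1 + e.choose 2 := Nat.choose_succ_succ' _ _
  rw [Nat.choose_one_right] at h1 h2
  refine Submodule.exists_mem_ne_zero_of_ne_bot fun hbot => ?_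
  rw [hbot, finrank_bot] at h
  omega

lemma le_finrank_linSys_qh {e D m₀ N : ℕ} (d a b r : ℕ) (he : 1 ≤ e) (ha : a ≤ d + 1)
    (hb : b ≤ d + 1) (hr : r + b = 6) (hD : D = r * e + d) (hm₀ : m₀ = r * (e - 1) + a)
    (hN : N + ((a + 1).choose 2 + 2 * e * (b + 1).choose 2) ≤ (d + 2).choose 2)
    (p : Fin (2 * e + 1) → Fin 3 → ℂ) :
    N ≤ Module.finrank ℂ (linSys p D (qh (2 * e) m₀)) := by
  obtain ⟨F, hF, h0⟩ := exists_mem_linSys_qm_one he p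
  have h1 := choose_le_finrank_linSys p (d := d) (m := qm (2 * e) a b) fun i => by
    simp only [qm]
    split_ifs <;> omega
  have h2 := finrank_linSys_le_of_mem (d := d) (m := qm (2 * e) a b) hF h0 r
  have h3 : (fun i => r * qm (2 * e) (e - 1) 1 i + qm (2 * e) a b i) =
      qh (2 * e) m₀ := by
    ext i
    simp only [qm, qh]
    split_ifs <;> omega
  rw [h3, ← hD] at h2
  rw [sum_choose_qm] at h1
  omega

lemma generically_projDim_eq {k d N : ℕ} {m : Fin k → ℕ} (hm : ∀ i, m i ≤ d + 1)
    (hle : ∃ p, Module.finrank ℂ (linSys p d m) ≤ N)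
    (hge : ∀ p, N ≤ Module.finrank ℂ (linSys p d m)) {M : ℤ} (hM : (N : ℤ) - 1 = M)
    (hv : M > max (-1) (virtDim d m)) :
    Generically k fun p => projDim p d m = M ∧ projDim p d m > max (-1) (virtDim d m) := by
  obtain ⟨p₀, hp₀⟩ := hle
  obtain ⟨P, hP, hPle⟩ := exists_polynomial_finrank_linSys_le p₀ hm
  refine ⟨P, ?_, fun p _ hp => ?_⟩
  · rintro rfl
    simp at hP
  · have h : projDim p d m = M := by
      rw [projDim, le_antisymm ((hPle p hp).trans hp₀) (hge p), hM]
    exact ⟨h, h ▸ hv⟩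

theorem special_L_4e_families :
    (∀ e : ℕ, 1 ≤ e → e ≤ 2 →
      virtDim (4 * e + 4) (qh (2 * e) (4 * e - 4)) = -6 * (e : ℤ) + 8 ∧
      Generically (2 * e + 1) (fun p =>
        projDim p (4 * e + 4) (qh (2 * e) (4 * e - 4)) = 14 - 6 * (e : ℤ) ∧
        projDim p (4 * e + 4) (qh (2 * e) (4 * e - 4)) >
          max (-1) (virtDim (4 * e + 4) (qh (2 * e) (4 * e - 4))))) ∧
    (∀ e : ℕ, 1 ≤ e → e ≤ 2 →
      virtDim (4 * e + 5) (qh (2 * e) (4 * e - 3)) = -6 * (e : ℤ) + 17 ∧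
      Generically (2 * e + 1) (fun p =>
        projDim p (4 * e + 5) (qh (2 * e) (4 * e - 3)) = 20 - 6 * (e : ℤ) ∧
        projDim p (4 * e + 5) (qh (2 * e) (4 * e - 3)) >
          max (-1) (virtDim (4 * e + 5) (qh (2 * e) (4 * e - 3))))) ∧
    (∀ e : ℕ, 1 ≤ e → e ≤ 4 →
      virtDim (4 * e + 6) (qh (2 * e) (4 * e - 2)) = -6 * (e : ℤ) + 26 ∧
      Generically (2 * e + 1) (fun p =>
        projDim p (4 * e + 6) (qh (2 * e) (4 * e - 2)) = 27 - 6 * (e : ℤ) ∧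
        projDim p (4 * e + 6) (qh (2 * e) (4 * e - 2)) >
          max (-1) (virtDim (4 * e + 6) (qh (2 * e) (4 * e - 2))))) := by
  refine ⟨fun e he he' => ⟨?_, ?_⟩, fun e he he' => ⟨?_, ?_⟩, fun e he he' => ⟨?_, ?_⟩⟩
  · interval_cases e <;> decide
  · refine generically_projDim_eq (N := 15 - 6 * e) (fun i => ?_) ?_ ?_ (by omega) ?_
    · simp only [qh]
      split_ifs <;> omega
    · refine exists_finrank_linSys_qh_le (b := 0) he (by norm_num) (by omega) (by omega) ?_
      have h4 := exists_finrank_quartic_le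
      have h2 := exists_finrank_linSys_le_of_succ (by norm_num)
        (exists_finrank_linSys_le_of_succ (by norm_num) h4)
      interval_cases e <;> assumption
    · refine le_finrank_linSys_qh 4 0 2 4 he ?_ ?_ rfl ?_ ?_ ?_ <;>
        interval_cases e <;> decide
    · interval_cases e <;> decide
  · interval_cases e <;> decide
  · refine generically_projDim_eq (N := 21 - 6 * e) (fun i => ?_) ?_ ?_ (by omega) ?_
    · simp only [qh]
      split_ifs <;> omega
    · refine exists_finrank_linSys_qh_le (b := 1) he (by norm_num) (by omega) (by omega) ?_
      have h4 := exists_finrank_quintic_le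
      have h2 := exists_finrank_linSys_le_of_succ (by norm_num)
        (exists_finrank_linSys_le_of_succ (by norm_num) h4)
      interval_cases e <;> assumption
    · refine le_finrank_linSys_qh (e + 5) e 3 3 he ?_ ?_ rfl ?_ ?_ ?_ <;>
        interval_cases e <;> decide
    · interval_cases e <;> decide
  · interval_cases e <;> decide
  · refine generically_projDim_eq (N := 28 - 6 * e) (fun i => ?_) ?_ ?_ (by omega) ?_
    · simp only [qh]
      split_ifs <;> omega
    · refine exists_finrank_linSys_qh_le (b := 2) he (by norm_num) (by omega) (by omega) ?_
      have h8 := exists_finrank_sextic_le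
      have h6 := exists_finrank_linSys_le_of_succ (by norm_num)
        (exists_finrank_linSys_le_of_succ (by norm_num) h8)
      have h4 := exists_finrank_linSys_le_of_succ (by norm_num)
        (exists_finrank_linSys_le_of_succ (by norm_num) h6)
      have h2 := exists_finrank_linSys_le_of_succ (by norm_num)
        (exists_finrank_linSys_le_of_succ (by norm_num) h4)
      interval_cases e <;> assumption
    · refine le_finrank_linSys_qh (2 * e + 6) (2 * e) 4 2 he ?_ ?_ rfl ?_ ?_ ?_ <;>
        interval_cases e <;> decide
    · interval_cases e <;> decide
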